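/- arXiv:math/0003140 — 3 statements merged into one kernel-verified Lean document; each statement's English description precedes it below -/
import Mathlib

section
/- Let (K, ν) be a measure space with ν a finite measure, let ε > 0, C > 0, and let E be a real normed vector space. Equip (0, ε] × K with the product of Lebesgue measure λ on (0, ε] and ν. Let ψ : (0, ε] × K → E and σ : (0, ε] × K → ℝ be measurable, suppose e^{-σ(t,k)} ≤ C·t for all (t,k) ∈ (0, ε] × K, and suppose ∫_{(0,ε]×K} e^{σ(t,k)} ‖ψ(t,k)‖² d(λ⊗ν)(t,k) < ∞. Then there exists a sequence (t_i) in (0, ε] with t_i → 0 such that ∫_K ‖ψ(t_i, k)‖² dν(k) → 0 (in particular these slice integrals are finite for all i). -/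
open MeasureTheory Filter
open scoped ENNReal

/-- The main analytic lemma in the proof of Theorem 1: if `e^{-σ(t,k)} ≤ C t` on the
collar `(0,ε] × K` and `∫ e^σ ‖ψ‖²` is finite, then the slice `L²`-norms of `ψ`
tend to zero along a sequence of times `t_i → 0`. -/
theorem exists_seq_slice_lintegral_tendsto_zero
    {K : Type*} [MeasurableSpace K] (ν : Measure K) [IsFiniteMeasure ν]
    (ε C : ℝ) (hε : 0 < ε) (hC : 0 < C)
    {E : Type*} [NormedAddCommGroup E] [NormedSpace ℝ E] [MeasurableSpace E] [BorelSpace E]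
    (ψ : ℝ × K → E) (σ : ℝ × K → ℝ) (hψ : Measurable ψ) (hσ : Measurable σ)
    (hbound : ∀ t ∈ Set.Ioc (0 : ℝ) ε, ∀ k : K, Real.exp (-σ (t, k)) ≤ C * t)
    (hfin : ∫⁻ p, ENNReal.ofReal (Real.exp (σ p) * ‖ψ p‖ ^ 2)
        ∂((volume.restrict (Set.Ioc (0 : ℝ) ε)).prod ν) < ⊤) :
    ∃ t : ℕ → ℝ, (∀ i, t i ∈ Set.Ioc (0 : ℝ) ε) ∧
      Tendsto t atTop (nhds 0) ∧
      (∀ i, ∫⁻ k, ENNReal.ofReal (‖ψ (t i, k)‖ ^ 2) ∂ν < ⊤) ∧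
      Tendsto (fun i => ∫⁻ k, ENNReal.ofReal (‖ψ (t i, k)‖ ^ 2) ∂ν) atTop (nhds 0) := by
  have key : ∀ δ : ℝ, 0 < δ → ∃ t ∈ Set.Ioc (0 : ℝ) ε, t ≤ δ ∧
      ∫⁻ k, ENNReal.ofReal (‖ψ (t, k)‖ ^ 2) ∂ν < ENNReal.ofReal δ := by
    intro δ hδ
    by_contra! hcon
    have hη : 0 < min ε δ := lt_min hε hδ
    have hmeas : Measurable fun p => ENNReal.ofReal (Real.exp (σ p) * ‖ψ p‖ ^ 2) :=
      ((Real.measurable_exp.comp hσ).mul (hψ.norm.pow_const 2)).ennreal_ofReal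
    rw [lintegral_prod _ hmeas.aemeasurable] at hfin
    have hle : ∫⁻ t in Set.Ioc 0 (min ε δ), ENNReal.ofReal (δ * C⁻¹ * t⁻¹) < ⊤ := by
      refine lt_of_le_of_lt ?_ hfin
      refine le_trans ?_ (lintegral_mono_set
        (Set.Ioc_subset_Ioc_right (min_le_left ε δ)))
      refine setLIntegral_mono' measurableSet_Ioc ?_
      intro t ht
      have ht' : t ∈ Set.Ioc (0 : ℝ) ε := ⟨ht.1, ht.2.trans (min_le_left _ _)⟩
      have h1 := hcon t ht' (ht.2.trans (min_le_right _ _))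
      have hCt : 0 < C * t := mul_pos hC ht.1
      calc ENNReal.ofReal (δ * C⁻¹ * t⁻¹)
          = ENNReal.ofReal ((C * t)⁻¹) * ENNReal.ofReal δ := by
            rw [← ENNReal.ofReal_mul (by positivity)]
            congr 1
            rw [mul_inv]; ring
        _ ≤ ENNReal.ofReal ((C * t)⁻¹) * ∫⁻ k, ENNReal.ofReal (‖ψ (t, k)‖ ^ 2) ∂ν := by
            gcongr
        _ = ∫⁻ k, ENNReal.ofReal ((C * t)⁻¹) * ENNReal.ofReal (‖ψ (t, k)‖ ^ 2) ∂ν :=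
            (lintegral_const_mul' _ _ ENNReal.ofReal_ne_top).symm
        _ ≤ _ := by
            refine lintegral_mono fun k => ?_
            rw [← ENNReal.ofReal_mul (by positivity)]
            refine ENNReal.ofReal_le_ofReal ?_
            refine mul_le_mul_of_nonneg_right ?_ (by positivity)
            have h2 := hbound t ht' k
            rw [Real.exp_neg] at h2
            exact inv_le_of_inv_le₀ (Real.exp_pos _) h2
    have hint : IntegrableOn (fun t : ℝ => δ * C⁻¹ * t⁻¹) (Set.Ioc 0 (min ε δ)) := by
      refine ⟨(measurable_inv.const_mul _).aestronglyMeasurable, ?_⟩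
      rw [hasFiniteIntegral_iff_ofReal]
      · exact hle
      · filter_upwards [ae_restrict_mem measurableSet_Ioc] with t ht
        have := ht.1
        show 0 ≤ δ * C⁻¹ * t⁻¹
        positivity
    have hint2 : IntervalIntegrable (fun t : ℝ => t⁻¹) volume 0 (min ε δ) := by
      rw [intervalIntegrable_iff_integrableOn_Ioc_of_le hη.le]
      have h3 := hint.const_mul (δ * C⁻¹)⁻¹
      refine h3.congr (Eventually.of_forall fun t => ?_)
      show (δ * C⁻¹)⁻¹ * (δ * C⁻¹ * t⁻¹) = t⁻¹
      have : δ * C⁻¹ ≠ 0 := by positivity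
      field_simp
    rw [intervalIntegrable_inv_iff] at hint2
    rcases hint2 with h | h
    · exact hη.ne h
    · exact h Set.left_mem_uIcc
  choose t ht1 ht2 ht3 using fun n : ℕ => key (1 / ((n : ℝ) + 1)) (by positivity)
  refine ⟨t, ht1, ?_, fun i => (ht3 i).trans ENNReal.ofReal_lt_top, ?_⟩
  · exact squeeze_zero (fun i => (ht1 i).1.le) ht2 tendsto_one_div_add_atTop_nhds_zero_nat
  · refine tendsto_of_tendsto_of_tendsto_of_le_of_le tendsto_const_nhds ?_
      (fun i => zero_le) (fun i => (ht3 i).le)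
    simpa using ENNReal.tendsto_ofReal
      (tendsto_one_div_add_atTop_nhds_zero_nat (𝕜 := ℝ))
end

section
/- Let (K, d_K) be a compact metric space equipped with a finite Borel measure ν, let ε > 0, and let E be a real normed vector space. Equip (0, ε] × K with the product of Lebesgue measure λ on (0, ε] and ν, and equip [0, ε] × K with the product metric. Let σ : (0, ε] × K → ℝ be Borel measurable, and suppose there is a locally Lipschitz function F : [0, ε] × K → ℝ with F(t, k) = e^{-σ(t,k)} for all (t, k) ∈ (0, ε] × K and F(0, k) = 0 for all k ∈ K. Let ψ : (0, ε] × K → E be measurable with ∫_{(0,ε]×K} e^{σ(t,k)} ‖ψ(t,k)‖² d(λ⊗ν)(t,k) < ∞. Then there exists a sequence (t_i) in (0, ε] with t_i → 0 such that ∫_K ‖ψ(t_i, k)‖² dν(k) → 0. -/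
open MeasureTheory Filter
open scoped ENNReal

lemma lip_bound_aux {K : Type*} [MetricSpace K] [CompactSpace K] (ε : ℝ) (hε : 0 < ε)
    (F : Set.Icc (0 : ℝ) ε × K → ℝ) (hF : LocallyLipschitz F)
    (hF0 : ∀ k : K, F (⟨0, Set.left_mem_Icc.2 hε.le⟩, k) = 0) :
    ∃ C > (0 : ℝ), ∃ δ > (0 : ℝ), ∀ k : K, ∀ t : Set.Icc (0 : ℝ) ε, (t : ℝ) < δ →
      F (t, k) ≤ C * t := by
  have key : ∃ C > (0 : ℝ), ∃ δ > (0 : ℝ), ∀ k ∈ (Set.univ : Set K),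
      ∀ t : Set.Icc (0 : ℝ) ε, (t : ℝ) < δ → F (t, k) ≤ C * t := by
    refine isCompact_univ.induction_on
      (p := fun s : Set K => ∃ C > (0 : ℝ), ∃ δ > (0 : ℝ), ∀ k ∈ s,
        ∀ t : Set.Icc (0 : ℝ) ε, (t : ℝ) < δ → F (t, k) ≤ C * t) ?_ ?_ ?_ ?_
    · exact ⟨1, one_pos, 1, one_pos, by simp⟩
    · rintro s t hst ⟨C, hC, δ, hδ, h⟩
      exact ⟨C, hC, δ, hδ, fun k hk => h k (hst hk)⟩
    · rintro s s' ⟨C, hC, δ, hδ, h⟩ ⟨C', hC', δ', hδ', h'⟩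
      refine ⟨max C C', lt_max_of_lt_left hC, min δ δ', lt_min hδ hδ', ?_⟩
      rintro k (hk | hk) t ht
      · exact (h k hk t (ht.trans_le (min_le_left _ _))).trans
          (mul_le_mul_of_nonneg_right (le_max_left _ _) t.2.1)
      · exact (h' k hk t (ht.trans_le (min_le_right _ _))).trans
          (mul_le_mul_of_nonneg_right (le_max_right _ _) t.2.1)
    · intro k0 _
      obtain ⟨L, U, hU, hL⟩ := hF (⟨0, Set.left_mem_Icc.2 hε.le⟩, k0)
      obtain ⟨r, hr, hball⟩ := Metric.mem_nhds_iff.1 hU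
      refine ⟨Metric.ball k0 r, mem_nhdsWithin_of_mem_nhds (Metric.ball_mem_nhds _ hr),
        L + 1, by positivity, r, hr, ?_⟩
      intro k hk t ht
      have hd : dist t (⟨0, Set.left_mem_Icc.2 hε.le⟩ : Set.Icc (0 : ℝ) ε) = t := by
        rw [Subtype.dist_eq, Real.dist_eq]
        simp [abs_of_nonneg t.2.1]
      have h1 : (t, k) ∈ U := hball (by
        rw [Metric.mem_ball, Prod.dist_eq]
        exact max_lt (by rw [hd]; exact ht) hk)
      have h2 : ((⟨0, Set.left_mem_Icc.2 hε.le⟩ : Set.Icc (0 : ℝ) ε), k) ∈ U := hball (by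
        rw [Metric.mem_ball, Prod.dist_eq]
        exact max_lt (by simpa using hr) hk)
      have h3 := hL.dist_le_mul _ h1 _ h2
      rw [hF0, Prod.dist_eq, hd, Real.dist_eq] at h3
      simp only [dist_self, sub_zero, max_eq_left t.2.1] at h3
      have := le_abs_self (F (t, k))
      have := t.2.1
      nlinarith
  obtain ⟨C, hC, δ, hδ, h⟩ := key
  exact ⟨C, hC, δ, hδ, fun k => h k (Set.mem_univ k)⟩

lemma lintegral_inv_aux (a : ℝ) (ha : 0 < a) :
    ∫⁻ t in Set.Ioc (0 : ℝ) a, ENNReal.ofReal t⁻¹ = ⊤ := by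
  by_contra hne
  have hi : IntegrableOn (fun t : ℝ => t⁻¹) (Set.Ioc 0 a) := by
    refine ⟨measurable_inv.aestronglyMeasurable, ?_⟩
    rw [hasFiniteIntegral_iff_ofReal]
    · exact lt_top_iff_ne_top.2 hne
    · filter_upwards [ae_restrict_mem measurableSet_Ioc] with t ht
      exact inv_nonneg.2 ht.1.le
  have := (intervalIntegrable_iff_integrableOn_Ioc_of_le ha.le).2 hi
  rw [intervalIntegrable_inv_iff] at this
  rcases this with h | h
  · exact ha.ne h
  · exact h Set.left_mem_uIcc

/-- Combination of two steps of the proof of Theorem 1: if `e^{-σ}` extends to a locally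
Lipschitz function on `[0,ε] × K` vanishing on `{0} × K` (with `K` compact, max product
metric) and `∫ e^σ ‖ψ‖² < ∞` on `(0,ε] × K`, then the slice `L²`-norms of `ψ` tend to
zero along a sequence of times `t_i → 0`. -/
theorem exists_seq_slice_lintegral_tendsto_zero_of_locallyLipschitz
    {K : Type*} [MetricSpace K] [CompactSpace K]
    [MeasurableSpace K] [BorelSpace K] (ν : Measure K) [IsFiniteMeasure ν]
    (ε : ℝ) (hε : 0 < ε)
    {E : Type*} [NormedAddCommGroup E] [NormedSpace ℝ E] [MeasurableSpace E] [BorelSpace E]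
    (σ : ℝ × K → ℝ) (hσ : Measurable σ)
    (F : Set.Icc (0 : ℝ) ε × K → ℝ) (hF : LocallyLipschitz F)
    (hFσ : ∀ (t : Set.Icc (0 : ℝ) ε) (k : K), 0 < (t : ℝ) → F (t, k) = Real.exp (-σ ((t : ℝ), k)))
    (hF0 : ∀ k : K, F (⟨0, Set.left_mem_Icc.2 hε.le⟩, k) = 0)
    (ψ : ℝ × K → E) (hψ : Measurable ψ)
    (hfin : ∫⁻ p, ENNReal.ofReal (Real.exp (σ p) * ‖ψ p‖ ^ 2)
        ∂((volume.restrict (Set.Ioc (0 : ℝ) ε)).prod ν) < ⊤) :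
    ∃ t : ℕ → ℝ, (∀ i, t i ∈ Set.Ioc (0 : ℝ) ε) ∧
      Tendsto t atTop (nhds 0) ∧
      Tendsto (fun i => ∫⁻ k, ENNReal.ofReal (‖ψ (t i, k)‖ ^ 2) ∂ν) atTop (nhds 0) := by
  obtain ⟨C, hC, δ, hδ, hb⟩ := lip_bound_aux ε hε F hF hF0
  have hm : Measurable fun p : ℝ × K => ENNReal.ofReal (Real.exp (σ p) * ‖ψ p‖ ^ 2) := by
    fun_prop
  rw [lintegral_prod _ hm.aemeasurable] at hfin
  have key : ∀ η : ℝ, 0 < η → ∃ t ∈ Set.Ioc (0 : ℝ) ε, t ≤ η ∧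
      ∫⁻ k, ENNReal.ofReal (‖ψ (t, k)‖ ^ 2) ∂ν ≤ ENNReal.ofReal η := by
    intro η hη
    by_contra! hcon
    set a := min (min η ε) (δ / 2) with ha
    have ha0 : 0 < a := lt_min (lt_min hη hε) (half_pos hδ)
    have haη : a ≤ η := (min_le_left _ _).trans (min_le_left _ _)
    have haε : a ≤ ε := (min_le_left _ _).trans (min_le_right _ _)
    have haδ : a ≤ δ / 2 := min_le_right _ _
    have hpt : ∀ t ∈ Set.Ioc (0 : ℝ) a, ENNReal.ofReal (η / C) * ENNReal.ofReal t⁻¹ ≤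
        ∫⁻ k, ENNReal.ofReal (Real.exp (σ (t, k)) * ‖ψ (t, k)‖ ^ 2) ∂ν := by
      intro t ht
      have h1 := (hcon t ⟨ht.1, ht.2.trans haε⟩ (ht.2.trans haη)).le
      have ht0 : 0 < t := ht.1
      calc ENNReal.ofReal (η / C) * ENNReal.ofReal t⁻¹
          = ENNReal.ofReal (C * t)⁻¹ * ENNReal.ofReal η := by
            rw [← ENNReal.ofReal_mul (by positivity), ← ENNReal.ofReal_mul (by positivity)]
            congr 1
            field_simp
        _ ≤ ENNReal.ofReal (C * t)⁻¹ * ∫⁻ k, ENNReal.ofReal (‖ψ (t, k)‖ ^ 2) ∂ν := by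
            gcongr
        _ = ∫⁻ k, ENNReal.ofReal (C * t)⁻¹ * ENNReal.ofReal (‖ψ (t, k)‖ ^ 2) ∂ν := by
            rw [lintegral_const_mul' _ _ ENNReal.ofReal_ne_top]
        _ ≤ _ := by
            refine lintegral_mono fun k => ?_
            rw [← ENNReal.ofReal_mul (by positivity)]
            apply ENNReal.ofReal_le_ofReal
            apply mul_le_mul_of_nonneg_right _ (by positivity)
            have h2 := hb k ⟨t, ht0.le, ht.2.trans haε⟩ (by
              have := ht.2
              show t < δ
              linarith)
            rw [hFσ _ _ ht0, Real.exp_neg] at h2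
            exact inv_le_of_inv_le₀ (Real.exp_pos _) h2
    have htop : (⊤ : ℝ≥0∞) ≤ ∫⁻ t in Set.Ioc (0 : ℝ) ε,
        ∫⁻ k, ENNReal.ofReal (Real.exp (σ (t, k)) * ‖ψ (t, k)‖ ^ 2) ∂ν := by
      calc (⊤ : ℝ≥0∞) = ENNReal.ofReal (η / C) *
            ∫⁻ t in Set.Ioc (0 : ℝ) a, ENNReal.ofReal t⁻¹ := by
            rw [lintegral_inv_aux a ha0, ENNReal.mul_top]
            simpa using div_pos hη hC
        _ = ∫⁻ t in Set.Ioc (0 : ℝ) a, ENNReal.ofReal (η / C) * ENNReal.ofReal t⁻¹ := by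
            rw [lintegral_const_mul' _ _ ENNReal.ofReal_ne_top]
        _ ≤ ∫⁻ t in Set.Ioc (0 : ℝ) a,
            ∫⁻ k, ENNReal.ofReal (Real.exp (σ (t, k)) * ‖ψ (t, k)‖ ^ 2) ∂ν :=
            setLIntegral_mono' measurableSet_Ioc hpt
        _ ≤ _ := lintegral_mono_set (Set.Ioc_subset_Ioc_right haε)
    exact absurd hfin (not_lt.2 htop)
  choose t ht htη htG using fun n : ℕ => key (1 / ((n : ℝ) + 1)) (by positivity)
  have hlim := tendsto_one_div_add_atTop_nhds_zero_nat (𝕜 := ℝ)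
  refine ⟨t, ht, ?_, ?_⟩
  · exact squeeze_zero (fun n => (ht n).1.le) htη hlim
  · have h := ENNReal.tendsto_ofReal hlim
    rw [ENNReal.ofReal_zero] at h
    exact tendsto_of_tendsto_of_tendsto_of_le_of_le tendsto_const_nhds h
      (fun _ => zero_le) htG
end

section
/- Let E be a finite-dimensional real normed vector space and let ρ : E → ℝ be a C² function with ρ(x) ≥ 0 for all x. Then the function x ↦ √(ρ(x)) is locally Lipschitz on E. -/
/-- The square root of a nonnegative `C²` function on a finite-dimensional real normed
space is locally Lipschitz. -/
theorem locallyLipschitz_sqrt_of_contDiff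
    {E : Type*} [NormedAddCommGroup E] [NormedSpace ℝ E] [FiniteDimensional ℝ E]
    (ρ : E → ℝ) (hρ : ContDiff ℝ 2 ρ) (hpos : ∀ x, 0 ≤ ρ x) :
    LocallyLipschitz fun x => Real.sqrt (ρ x) := by
  intro x₀
  have hdiff : Differentiable ℝ ρ := hρ.differentiable (by norm_num)
  have hd1 : ContDiff ℝ 1 (fderiv ℝ ρ) := hρ.fderiv_right (by norm_num)
  obtain ⟨K, T, hT, hK⟩ := hd1.contDiffAt.exists_lipschitzOnWith (x := x₀)
  have hB : ∀ᶠ y in nhds x₀, ρ y < ρ x₀ + 1 :=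
    hρ.continuous.continuousAt.eventually_lt continuousAt_const (by simp)
  obtain ⟨R, hR, hRs⟩ := Metric.mem_nhds_iff.1 (Filter.inter_mem hT hB)
  -- Taylor estimate
  have taylor : ∀ y ∈ Metric.ball x₀ R, ∀ z ∈ Metric.ball x₀ R,
      |ρ z - ρ y - fderiv ℝ ρ y (z - y)| ≤ K * ‖z - y‖ ^ 2 := by
    intro y hy z hz
    have hseg : segment ℝ y z ⊆ Metric.ball x₀ R := (convex_ball x₀ R).segment_subset hy hz
    have := (convex_segment y z).norm_image_sub_le_of_norm_hasFDerivWithin_le'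
      (f := ρ) (f' := fderiv ℝ ρ) (φ := fderiv ℝ ρ y) (C := K * ‖z - y‖)
      (fun w _ => (hdiff w).hasFDerivAt.hasFDerivWithinAt)
      (fun w hw => by
        have h1 := hK.norm_sub_le (hRs (hseg hw)).1 (hRs hy).1
        refine h1.trans ?_
        have h2 : ‖w - y‖ ≤ ‖z - y‖ := by
          have := norm_sub_le_of_mem_segment hw
          simpa [norm_sub_rev] using this
        gcongr)
      (left_mem_segment ℝ y z) (right_mem_segment ℝ y z)
    rw [Real.norm_eq_abs] at this
    nlinarith [this]
  set r := R / 2 with hr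
  have hr0 : 0 < r := by positivity
  set B := ρ x₀ + 1 with hBdef
  have hB0 : 0 < B := by linarith [hpos x₀]
  set s := r / (B + 1) with hs
  have hs0 : 0 < s := by positivity
  have hsB : s * (B + 1) = r := by rw [hs]; field_simp
  set C : ℝ := 1 / s + K * s + K + 1 with hC
  have hK0 : (0 : ℝ) ≤ K := K.2
  have hC0 : 0 ≤ C := by positivity
  have key : ∀ y ∈ Metric.ball x₀ r, ∀ z ∈ Metric.ball x₀ r,
      Real.sqrt (ρ z) ≤ Real.sqrt (ρ y) + C * dist z y := by
    intro y hy z hz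
    have hyR : y ∈ Metric.ball x₀ R := Metric.ball_subset_ball (by linarith) hy
    have hzR : z ∈ Metric.ball x₀ R := Metric.ball_subset_ball (by linarith) hz
    set a := Real.sqrt (ρ y) with ha
    have ha0 : 0 ≤ a := Real.sqrt_nonneg _
    have haa : a ^ 2 = ρ y := Real.sq_sqrt (hpos y)
    have hyB : ρ y < B := (hRs hyR).2
    have haB : a < B + 1 := by nlinarith
    rw [dist_eq_norm]
    set d := ‖z - y‖ with hd
    have hd0 : 0 ≤ d := norm_nonneg _
    have grad : fderiv ℝ ρ y (z - y) ≤ (1 / s + K * s) * a * d := by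
      rcases ha0.eq_or_lt with h0 | hapos
      · have hmin : IsLocalMin ρ y := Filter.Eventually.of_forall fun w => by
          have : ρ y = 0 := by rw [← haa, ← h0]; norm_num
          rw [this]; exact hpos w
        rw [hmin.fderiv_eq_zero, ← h0]; simp
      rcases hd0.eq_or_lt with h0 | hdpos
      · have : z - y = 0 := norm_eq_zero.1 h0.symm
        rw [this, ← h0]; simp
      set τ := s * a / d with hτ
      have hτ0 : 0 < τ := by positivity
      have hτd : τ * d = s * a := by rw [hτ]; field_simp
      have hw : y - τ • (z - y) ∈ Metric.ball x₀ R := by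
        rw [mem_ball_iff_norm] at hy ⊢
        have h1 : ‖y - τ • (z - y) - x₀‖ ≤ ‖y - x₀‖ + ‖τ • (z - y)‖ := by
          rw [sub_right_comm]; exact norm_sub_le _ _
        rw [norm_smul, Real.norm_of_nonneg hτ0.le, ← hd, hτd] at h1
        nlinarith
      have h2 := (abs_le.1 (taylor y hyR _ hw)).2
      have e : y - τ • (z - y) - y = -(τ • (z - y)) := by abel
      rw [e, norm_neg, norm_smul, Real.norm_of_nonneg hτ0.le, ← hd, hτd, map_neg, map_smul,
        smul_eq_mul] at h2
      have h3 : τ * fderiv ℝ ρ y (z - y) ≤ a ^ 2 + K * (s * a) ^ 2 := by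
        linarith [hpos (y - τ • (z - y))]
      have h4 : τ * ((1 / s + K * s) * a * d) = a ^ 2 + K * (s * a) ^ 2 := by
        rw [hτ]; field_simp
      exact le_of_mul_le_mul_left (h3.trans h4.ge) hτ0
    have h5 := (abs_le.1 (taylor y hyR z hzR)).2
    rw [← hd] at h5
    apply Real.sqrt_le_iff.2 ⟨by positivity, ?_⟩
    have hP : 0 ≤ 1 / s + K * s := by positivity
    have hCC : (K : ℝ) ≤ C ^ 2 := by nlinarith
    have h6 : (1 / s + K * s) * a * d ≤ C * a * d := by
      gcongr; linarith
    have h7 : K * d ^ 2 ≤ C ^ 2 * d ^ 2 := by gcongr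
    have h8 : 0 ≤ C * a * d := by positivity
    nlinarith
  refine ⟨C.toNNReal, Metric.ball x₀ r, Metric.ball_mem_nhds _ hr0, ?_⟩
  refine LipschitzOnWith.of_le_add_mul _ fun z hz y hy => ?_
  rw [Real.coe_toNNReal _ hC0]
  exact key y hy z hz
end
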